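/- Fix a Littlewood–Paley partition (χ̃, χ). Let α ∈ ℝ and p, q, p′, q′ ∈ [1,∞] with 1/p + 1/p′ = 1 and 1/q + 1/q′ = 1. There exists a constant C > 0 such that, uniformly over all integers N ≥ 1 (ε = 1/N) and all f, g: Λ_ε → ℝ, one has ⟨f,g⟩_{Λ_ε} ≤ C ‖f‖_{B^α_{p,q}(Λ_ε)} ‖g‖_{B^{−α}_{p′,q′}(Λ_ε)}. -/

import Mathlib

open scoped BigOperators ENNReal
open MeasureTheory

noncomputable section

namespace IsingKac

/-- The periodic lattice `Λ_N = {1-N, …, N}²`, realised as `(ℤ/2Nℤ)²`. -/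
abbrev Lat (N : ℕ) : Type := ZMod (2*N) × ZMod (2*N)

instance latNeZero (N : ℕ) [NeZero N] : NeZero (2*N) := ⟨by have := NeZero.ne N; omega⟩

/-- The representative of `v ∈ ℤ/2Nℤ` lying in `{1-N, …, N}`. -/
def latRep (N : ℕ) (v : ZMod (2*N)) : ℤ :=
  if (v.val : ℤ) ≤ (N : ℤ) then (v.val : ℤ) else (v.val : ℤ) - 2*N

def latRep2 (N : ℕ) (z : Lat N) : ℤ × ℤ := (latRep N z.1, latRep N z.2)

/-- The character `e_w(x) = exp(iπ w·x)`. -/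
def eW (w : ℤ × ℤ) (x : ℝ × ℝ) : ℂ :=
  Complex.exp ((Real.pi : ℂ) * Complex.I * ((w.1 : ℂ) * (x.1 : ℂ) + (w.2 : ℂ) * (x.2 : ℂ)))

/-- The point `ε z ∈ Λ_ε ⊂ 𝕋²` corresponding to `z ∈ Λ_N` (with `ε = 1/N`). -/
def latPt (N : ℕ) (z : Lat N) : ℝ × ℝ :=
  ((latRep N z.1 : ℝ) / N, (latRep N z.2 : ℝ) / N)

/-- Discrete Fourier coefficient `f̂(w) = Σ_{x ∈ Λ_ε} ε² f(x) e^{-iπ w·x}`. -/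
def dFT (N : ℕ) [NeZero N] (f : Lat N → ℂ) (w : ℤ × ℤ) : ℂ :=
  ∑ z : Lat N, ((N : ℂ)^2)⁻¹ * f z * (starRingEnd ℂ) (eW w (latPt N z))

/-- The extension operator `(Ex f)(x) = (1/4) Σ_{w ∈ Λ_N} f̂(w) e^{iπ w·x}` for `x ∈ 𝕋²`. -/
def Ex (N : ℕ) [NeZero N] (f : Lat N → ℂ) (x : ℝ × ℝ) : ℂ :=
  (1/4 : ℂ) * ∑ z : Lat N, dFT N f (latRep2 N z) * eW (latRep2 N z) x

/-- Discrete `L^p` norm on `Λ_ε`, `p ∈ [1,∞]`. -/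
def dLp (N : ℕ) [NeZero N] (p : ℝ≥0∞) {E : Type*} [NormedAddCommGroup E]
    (f : Lat N → E) : ℝ :=
  if p = ∞ then ⨆ z : Lat N, ‖f z‖
  else (∑ z : Lat N, ((N : ℝ)^2)⁻¹ * ‖f z‖ ^ p.toReal) ^ (1/p.toReal)

/-- Fundamental domain of the torus `𝕋² = [-1,1]²`. -/
def box : Set (ℝ × ℝ) := Set.Icc (-1 : ℝ) 1 ×ˢ Set.Icc (-1 : ℝ) 1

/-- `L^p(𝕋²)` norm, `p ∈ [1,∞]`. -/
def cLp (p : ℝ≥0∞) {E : Type*} [NormedAddCommGroup E] (g : ℝ × ℝ → E) : ℝ≥0∞ :=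
  eLpNorm g p (volume.restrict box)

/-- Euclidean norm on `ℝ²`. -/
def enorm2 (r : ℝ × ℝ) : ℝ := Real.sqrt (r.1^2 + r.2^2)

/-- A Littlewood–Paley partition of unity `(χ̃, χ)` on `ℝ²`. -/
structure LPpartition : Type where
  chit : ℝ × ℝ → ℝ
  chi : ℝ × ℝ → ℝ
  cont_t : Continuous chit
  cont : Continuous chi
  mem_t : ∀ r, chit r ∈ Set.Icc (0:ℝ) 1
  mem : ∀ r, chi r ∈ Set.Icc (0:ℝ) 1
  supp_t : ∀ r : ℝ × ℝ, 4/3 < enorm2 r → chit r = 0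
  supp : ∀ r : ℝ × ℝ, enorm2 r < 3/4 ∨ 8/3 < enorm2 r → chi r = 0
  partition : ∀ r : ℝ × ℝ, chit r + ∑' k : ℕ, chi ((2:ℝ)^(-(k:ℤ)) • r) = 1

/-- `χ_k`, for `k ≥ -1`. -/
def LPchi (P : LPpartition) (k : ℤ) : ℝ × ℝ → ℝ :=
  if k = -1 then P.chit else fun r => P.chi ((2:ℝ)^(-k) • r)

/-- The Littlewood–Paley block `δ_k (Ex f)` of (the extension of) a lattice function. -/
def dBlock (N : ℕ) [NeZero N] (P : LPpartition) (k : ℤ) (f : Lat N → ℂ) (x : ℝ × ℝ) : ℂ :=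
  (1/4 : ℂ) * ∑ z : Lat N,
    ((LPchi P k ((latRep N z.1 : ℝ), (latRep N z.2 : ℝ)) : ℝ) : ℂ) *
      dFT N f (latRep2 N z) * eW (latRep2 N z) x

/-- Discrete Besov norm `‖f‖_{B^ν_{p,q}(Λ_ε)}`. -/
def dBesov (N : ℕ) [NeZero N] (P : LPpartition) (ν : ℝ) (p q : ℝ≥0∞) (f : Lat N → ℂ) : ℝ :=
  if q = ∞ then
    ⨆ k : ℕ, (2:ℝ)^(ν * ((k:ℝ) - 1)) * dLp N p (fun z => dBlock N P ((k:ℤ)-1) f (latPt N z))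
  else
    (∑' k : ℕ, ((2:ℝ)^(ν * ((k:ℝ) - 1)) *
      dLp N p (fun z => dBlock N P ((k:ℤ)-1) f (latPt N z))) ^ q.toReal) ^ (1/q.toReal)

/-- The `C^{-ν}` (Besov–Hölder) norm of the extension `Ex f`:
`sup_{k ≥ -1} 2^{-νk} ‖δ_k (Ex f)‖_{L^∞(𝕋²)}`. -/
def holderNeg (N : ℕ) [NeZero N] (P : LPpartition) (ν : ℝ) (f : Lat N → ℂ) : ℝ :=
  ⨆ k : ℕ, (2:ℝ)^(-ν * ((k:ℝ) - 1)) * ⨆ x : ℝ × ℝ, ‖dBlock N P ((k:ℤ)-1) f x‖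

/-- Spin values. -/
def spin (s : Bool) : ℝ := if s then 1 else -1

/-- Hamiltonian `H(σ) = (β/2) Σ_{x,y} k(x-y) σ_x σ_y + b Σ_x σ_x`. -/
def hamil (N : ℕ) [NeZero N] (kk : Lat N → ℝ) (β b : ℝ) (σ : Lat N → ℝ) : ℝ :=
  β/2 * ∑ x : Lat N, ∑ y : Lat N, kk (x - y) * σ x * σ y + b * ∑ x : Lat N, σ x

/-- Gibbs expectation `E^γ_{β,b}[F]`. -/
def gibbsE (N : ℕ) [NeZero N] (kk : Lat N → ℝ) (β b : ℝ) (F : (Lat N → ℝ) → ℝ) : ℝ :=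
  (∑ s : Lat N → Bool, Real.exp (hamil N kk β b (fun x => spin (s x))) * F (fun x => spin (s x))) /
  (∑ s : Lat N → Bool, Real.exp (hamil N kk β b (fun x => spin (s x))))

/-- The profile `𝔎 : ℝ² → [0,1]`, twice differentiable, radial, supported in `B(0,3)`,
not identically zero. -/
structure KacProfile : Type where
  f : ℝ × ℝ → ℝ
  smooth : ContDiff ℝ 2 f
  mem : ∀ x, f x ∈ Set.Icc (0:ℝ) 1
  radial : ∀ x y : ℝ × ℝ, enorm2 x = enorm2 y → f x = f y
  supp : ∀ x : ℝ × ℝ, 3 < enorm2 x → f x = 0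
  nontriv : ∃ x, f x ≠ 0

/-- The Kac kernel `k_γ(z) = c γ² 𝔎(γ·z)` (shortest periodic representative), `k_γ(0)=0`. -/
def kGamma (𝔎 : KacProfile) (N : ℕ) (c γ : ℝ) (z : Lat N) : ℝ :=
  if z = 0 then 0 else c * γ^2 * 𝔎.f (γ * (latRep N z.1 : ℝ), γ * (latRep N z.2 : ℝ))

/-- `γ = N^{-1/2}`, so that `γ² = ε = 1/N`. -/
def gam (N : ℕ) : ℝ := Real.sqrt ((N : ℝ)⁻¹)

/-- Fourier transform `K̂_γ(ω) = Σ_z k_γ(z) e^{-iπ ω·(εz)}` of the macroscopic kernel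
(real, since the kernel is even). -/
def kHat (N : ℕ) [NeZero N] (kk : Lat N → ℝ) (ω : ℤ × ℤ) : ℝ :=
  ∑ z : Lat N, kk z *
    Real.cos (Real.pi * ((ω.1 : ℝ) * (latRep N z.1 : ℝ) / N + (ω.2 : ℝ) * (latRep N z.2 : ℝ) / N))

/-- The renormalisation constant
`𝔠_γ = (1/4) Σ_{ω ∈ Λ_N \ {0}} |K̂_γ(ω)|² / (γ^{-2} (1-K̂_γ(ω)))`. -/
def cGamma (N : ℕ) [NeZero N] (kk : Lat N → ℝ) (γ : ℝ) : ℝ :=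
  (1/4) * ∑ z : Lat N, if z = (0 : Lat N) then 0 else
    (kHat N kk (latRep2 N z))^2 / ((γ^2)⁻¹ * (1 - kHat N kk (latRep2 N z)))

/-- Critical inverse temperature `β = 1 + γ²(𝔠_γ + A)`. -/
def betaCrit (𝔎 : KacProfile) (N : ℕ) [NeZero N] (c A : ℝ) : ℝ :=
  1 + (gam N)^2 * (cGamma N (kGamma 𝔎 N c (gam N)) (gam N) + A)

/-- The fluctuation field `X_γ(x) = γ^{-1} Σ_z k_γ(ε^{-1}x - z) σ_z`, as a function on `Λ_N`. -/
def fluct (N : ℕ) [NeZero N] (kk : Lat N → ℝ) (γ : ℝ) (σ : Lat N → ℝ) (z : Lat N) : ℝ :=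
  γ⁻¹ * ∑ y : Lat N, kk (z - y) * σ y

/-- The rescaled step field `γ^{-1} σ_{⌊ε^{-1}x⌋}` on the torus (without the `γ^{-1}`). -/
def stepField (N : ℕ) (σ : Lat N → ℝ) (x : ℝ × ℝ) : ℝ :=
  σ (((⌊(N : ℝ) * x.1⌋ : ℤ) : ZMod (2*N)), ((⌊(N : ℝ) * x.2⌋ : ℤ) : ZMod (2*N)))

/-- Fourier coefficient on the torus: `ĝ(ω) = ∫_{𝕋²} g(x) e^{-iπω·x} dx`. -/
def cFT (g : ℝ × ℝ → ℂ) (ω : ℤ × ℤ) : ℂ :=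
  ∫ x in box, g x * (starRingEnd ℂ) (eW ω x)


/-! ### Additional definitions -/

/-- Nearest-neighbour Dirichlet sum `Σ_{x,y ∈ Λ_ε, |x-y|=ε} ε² (f(y)-f(x))²`. -/
def nnSum (N : ℕ) [NeZero N] (f : Lat N → ℝ) : ℝ :=
  ∑ x : Lat N, ((N : ℝ)^2)⁻¹ *
    ((f (x + (1, 0)) - f x)^2 + (f (x + (0, 1)) - f x)^2 +
     (f (x - (1, 0)) - f x)^2 + (f (x - (0, 1)) - f x)^2)

/-- The `d`-dimensional periodic lattice `Λ_N^d`. -/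
abbrev LatD (d N : ℕ) : Type := Fin d → ZMod (2*N)

/-- Discrete `L^p` norm on `Λ_ε^d`, `p ∈ [1,∞]`. -/
def dLpD (d N : ℕ) [NeZero N] (p : ℝ≥0∞) (f : LatD d N → ℂ) : ℝ :=
  if p = ∞ then ⨆ z : LatD d N, ‖f z‖
  else (∑ z : LatD d N, ((N : ℝ)^d)⁻¹ * ‖f z‖ ^ p.toReal) ^ (1/p.toReal)

/-- `Σ_{w ∈ Λ_N^d} χ(λ w) e_w`, evaluated at the lattice point `ε z ∈ Λ_ε^d`. -/
def gLam (d N : ℕ) [NeZero N] (χ : (Fin d → ℝ) → ℝ) (lam : ℝ) (z : LatD d N) : ℂ :=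
  ∑ w : LatD d N, ((χ (fun i => lam * (latRep N (w i) : ℝ)) : ℝ) : ℂ) *
    Complex.exp ((Real.pi : ℂ) * Complex.I *
      ((∑ i : Fin d, (latRep N (w i) : ℝ) * ((latRep N (z i) : ℝ) / N) : ℝ) : ℂ))

/-- Second partial derivative of `φ` in directions `v, w`. -/
def pd2 (φ : ℝ × ℝ → ℝ) (v w : ℝ × ℝ) : ℝ × ℝ → ℝ :=
  fun x => fderiv ℝ (fun y => fderiv ℝ φ y v) x w

/-- `max_{i,j ∈ {1,2}} ‖∂_i ∂_j φ‖_{L^∞}`. -/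
def secondDerivBound (φ : ℝ × ℝ → ℝ) : ℝ :=
  max (max (⨆ x : ℝ × ℝ, |pd2 φ (1,0) (1,0) x|) (⨆ x : ℝ × ℝ, |pd2 φ (1,0) (0,1) x|))
      (max (⨆ x : ℝ × ℝ, |pd2 φ (0,1) (1,0) x|) (⨆ x : ℝ × ℝ, |pd2 φ (0,1) (0,1) x|))

/-- The Littlewood–Paley block `δ_k g` of a function on the torus. -/
def cBlock (P : LPpartition) (k : ℤ) (g : ℝ × ℝ → ℂ) (x : ℝ × ℝ) : ℂ :=
  (1/4 : ℂ) * ∑' ω : ℤ × ℤ, ((LPchi P k ((ω.1 : ℝ), (ω.2 : ℝ)) : ℝ) : ℂ) * cFT g ω * eW ω x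

/-- Besov norm `‖g‖_{B^ν_{1,1}(𝕋²)} = Σ_{k ≥ -1} 2^{νk} ‖δ_k g‖_{L¹(𝕋²)}`. -/
def cBesov11 (P : LPpartition) (ν : ℝ) (g : ℝ × ℝ → ℂ) : ℝ :=
  ∑' k : ℕ, (2:ℝ) ^ (ν * ((k:ℝ) - 1)) * ∫ x in box, ‖cBlock P ((k:ℤ)-1) g x‖

open scoped NNReal
open scoped ComplexConjugate

/-!
Parseval writes `⟨f, g⟩` as the sum of `⟨δ_j f, δ_k g⟩` over all pairs of Littlewood–Paley blocks.
The annuli carrying `χ_j` and `χ_k` are disjoint once `|j - k| ≥ 2`, so only the pairs with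
`|j - k| ≤ 1` contribute. For those, Hölder's inequality on the lattice bounds `|⟨δ_j f, δ_k g⟩|`
by `2^|α|` times `(2^(αj) ‖δ_j f‖_{L^p}) (2^(-αk) ‖δ_k g‖_{L^{p'}})`, and Hölder's inequality in
`ℓ^q`, `ℓ^{q'}` along the near-diagonal pairs, each row and column of which has at most three
entries, costs a further factor `3^(1/q) 3^(1/q') = 3`.
-/

section Holder

variable {X Y E F : Type*} [MeasurableSpace X] [MeasurableSpace Y]
  [NormedAddCommGroup E] [NormedAddCommGroup F]

variable {μ : Measure X} {ν : Measure Y} {S : Set (X × Y)} {c : ℝ≥0∞}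

theorem map_fst_restrict_prod_le [SFinite ν] (hS : MeasurableSet S)
    (hc : ∀ x, ν (Prod.mk x ⁻¹' S) ≤ c) : ((μ.prod ν).restrict S).map Prod.fst ≤ c • μ := by
  refine Measure.le_iff.2 fun s hs => ?_
  rw [Measure.map_apply measurable_fst hs, Measure.restrict_apply (measurable_fst hs),
    Measure.prod_apply ((measurable_fst hs).inter hS)]
  calc ∫⁻ x, ν (Prod.mk x ⁻¹' (Prod.fst ⁻¹' s ∩ S)) ∂μ
      ≤ ∫⁻ x, s.indicator (fun _ => c) x ∂μ := by
        refine lintegral_mono fun x => ?_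
        by_cases hx : x ∈ s
        · simpa [hx] using (measure_mono Set.inter_subset_right).trans (hc x)
        · simp [hx, Set.preimage_preimage]
    _ = (c • μ) s := by simp [lintegral_indicator_const hs]

theorem map_snd_restrict_prod_le [SFinite μ] [SFinite ν] (hS : MeasurableSet S)
    (hc : ∀ y, μ ((fun x => (x, y)) ⁻¹' S) ≤ c) :
    ((μ.prod ν).restrict S).map Prod.snd ≤ c • ν := by
  rw [← Measure.prod_swap, Measure.restrict_map measurable_swap hS,
    Measure.map_map measurable_snd measurable_swap]
  exact map_fst_restrict_prod_le (measurable_swap hS) hc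

theorem eLpNorm_comp_le_of_map_le {φ : Y → X} (hφ : Measurable φ) (hν : ν.map φ ≤ c • μ)
    {f : X → E} (hf : AEStronglyMeasurable f μ) (p : ℝ≥0∞) :
    eLpNorm (f ∘ φ) p ν ≤ c ^ p⁻¹.toReal * eLpNorm f p μ := by
  rw [← eLpNorm_map_measure ((hf.smul_measure c).mono_measure hν) hφ.aemeasurable, ← one_div]
  exact (eLpNorm_mono_measure f hν).trans (eLpNorm_smul_measure_le c f p μ)

theorem toReal_eLpNorm_smul_count [MeasurableSingletonClass X] {p : ℝ≥0∞} (hp : p ≠ 0)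
    {r : ℝ≥0} (hr : r ≠ 0) (f : X → E) :
    (eLpNorm f p (r • Measure.count)).toReal =
      if p = ∞ then ⨆ x, ‖f x‖ else (∑' x, r * ‖f x‖ ^ p.toReal) ^ (1 / p.toReal) := by
  split_ifs with h
  · rw [h, eLpNorm_exponent_top, eLpNormEssSup_smul_measure hr, eLpNormEssSup_count,
      ENNReal.toReal_iSup fun _ => enorm_ne_top]
    simp only [toReal_enorm]
  · have hfin (x : X) : ‖f x‖ₑ ^ p.toReal ≠ ∞ :=
      ENNReal.rpow_ne_top_of_nonneg ENNReal.toReal_nonneg enorm_ne_top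
    rw [eLpNorm_eq_lintegral_rpow_enorm_toReal hp h, lintegral_smul_measure, lintegral_count,
      ← ENNReal.toReal_rpow, ENNReal.smul_def, smul_eq_mul, ENNReal.toReal_mul,
      ENNReal.tsum_toReal_eq hfin, ← tsum_mul_left]
    simp only [← ENNReal.toReal_rpow, toReal_enorm, ENNReal.coe_toReal]

theorem memLp_count_of_finite_support [MeasurableSingletonClass X] {f : X → E}
    (hf : f.support.Finite) (p : ℝ≥0∞) : MemLp f p Measure.count := by
  have hsum : f = fun x => ∑ a ∈ hf.toFinset, ({a} : Set X).indicator (fun _ => f a) x := by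
    classical
    ext x
    simp [Set.indicator_apply]
  rw [hsum]
  exact memLp_finsetSum _ fun a _ =>
    memLp_indicator_const p (measurableSet_singleton a) (f a) (.inr (by simp))

theorem count_prod_count [Countable X] [Countable Y] [MeasurableSingletonClass X]
    [MeasurableSingletonClass Y] :
    (Measure.count : Measure X).prod (Measure.count : Measure Y) = Measure.count := by
  refine Measure.ext_of_singleton fun z => ?_
  rw [← Set.singleton_prod_singleton, Measure.prod_prod]
  simp

theorem lintegral_enorm_mul_enorm_le (p q : ℝ≥0∞) [p.HolderConjugate q]
    {f : X → E} {g : X → F} (hf : AEStronglyMeasurable f μ) (hg : AEStronglyMeasurable g μ) :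
    ∫⁻ x, ‖f x‖ₑ * ‖g x‖ₑ ∂μ ≤ eLpNorm f p μ * eLpNorm g q μ := by
  have h := eLpNorm_le_eLpNorm_mul_eLpNorm'_of_norm (p := p) (q := q) (r := 1)
    hf.norm hg.norm (· * ·) 1 (.of_forall fun x => by simp)
  simpa [eLpNorm_one_eq_lintegral_enorm, enorm_mul] using h

theorem rpow_inv_mul_rpow_inv_of_holderConjugate (p q : ℝ≥0∞) [p.HolderConjugate q] (c : ℝ≥0∞) :
    c ^ p⁻¹.toReal * c ^ q⁻¹.toReal = c := by
  have hp : p⁻¹ ≠ ∞ := ENNReal.inv_ne_top.2 (ENNReal.HolderConjugate.ne_zero p q)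
  have hq : q⁻¹ ≠ ∞ := ENNReal.inv_ne_top.2 (ENNReal.HolderConjugate.ne_zero q p)
  rw [← ENNReal.rpow_add_of_nonneg _ _ ENNReal.toReal_nonneg ENNReal.toReal_nonneg,
    ← ENNReal.toReal_add hp hq, ENNReal.HolderConjugate.inv_add_inv_eq_one, ENNReal.toReal_one,
    ENNReal.rpow_one]

theorem setLIntegral_prod_enorm_mul_enorm_le [SFinite μ] [SFinite ν] (p q : ℝ≥0∞)
    [p.HolderConjugate q] (hS : MeasurableSet S) {A B : ℝ≥0∞}
    (hA : ∀ x, ν (Prod.mk x ⁻¹' S) ≤ A) (hB : ∀ y, μ ((fun x => (x, y)) ⁻¹' S) ≤ B)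
    {f : X → E} {g : Y → F} (hf : AEStronglyMeasurable f μ) (hg : AEStronglyMeasurable g ν) :
    ∫⁻ z in S, ‖f z.1‖ₑ * ‖g z.2‖ₑ ∂μ.prod ν ≤
      A ^ p⁻¹.toReal * B ^ q⁻¹.toReal * (eLpNorm f p μ * eLpNorm g q ν) := by
  calc ∫⁻ z in S, ‖f z.1‖ₑ * ‖g z.2‖ₑ ∂μ.prod ν
      ≤ eLpNorm (f ∘ Prod.fst) p ((μ.prod ν).restrict S) *
          eLpNorm (g ∘ Prod.snd) q ((μ.prod ν).restrict S) :=
        lintegral_enorm_mul_enorm_le p q hf.comp_fst.restrict hg.comp_snd.restrict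
    _ ≤ A ^ p⁻¹.toReal * eLpNorm f p μ * (B ^ q⁻¹.toReal * eLpNorm g q ν) := by
        gcongr
        · exact eLpNorm_comp_le_of_map_le measurable_fst (map_fst_restrict_prod_le hS hA) hf p
        · exact eLpNorm_comp_le_of_map_le measurable_snd (map_snd_restrict_prod_le hS hB) hg q
    _ = _ := by ring

end Holder

section Fourier

theorem sum_stdAddChar_mul_conj {n : ℕ} [NeZero n] (u v : ZMod n) :
    ∑ x : ZMod n, (ZMod.stdAddChar (x * u) : ℂ) * conj (ZMod.stdAddChar (x * v) : ℂ) =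
      if u = v then (n : ℂ) else 0 := by
  have h (x : ZMod n) : (ZMod.stdAddChar (x * u) : ℂ) * conj (ZMod.stdAddChar (x * v) : ℂ) =
      ZMod.stdAddChar (x * (u - v)) := by
    rw [← AddChar.map_neg_eq_conj, ← AddChar.map_add_eq_mul, mul_sub, sub_eq_add_neg]
  simp only [h, AddChar.sum_mulShift _ (ZMod.isPrimitive_stdAddChar n), sub_eq_zero, ZMod.card,
    Nat.cast_ite, Nat.cast_zero]

variable {N : ℕ} [NeZero N]

theorem latRep_eq_valMinAbs (v : ZMod (2 * N)) : latRep N v = v.valMinAbs := by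
  simp only [latRep, ZMod.valMinAbs_def_pos, Nat.cast_le, Nat.mul_div_cancel_left N two_pos,
    Nat.cast_mul, Nat.cast_ofNat]

theorem stdAddChar_mul_eq_exp_latRep (u v : ZMod (2 * N)) : (ZMod.stdAddChar (u * v) : ℂ) =
    Complex.exp (Real.pi * Complex.I * (latRep N u * (latRep N v / N))) := by
  have hN : (N : ℂ) ≠ 0 := NeZero.ne _
  have huv : u * v = ((latRep N u * latRep N v : ℤ) : ZMod (2 * N)) := by
    simp [latRep_eq_valMinAbs]
  rw [huv, ZMod.stdAddChar_coe]
  congr 1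
  push_cast
  field_simp

theorem eW_latRep2_latPt (w z : Lat N) : eW (latRep2 N w) (latPt N z) =
    ZMod.stdAddChar (w.1 * z.1) * ZMod.stdAddChar (w.2 * z.2) := by
  simp only [stdAddChar_mul_eq_exp_latRep, ← Complex.exp_add, ← mul_add, eW, latRep2, latPt]
  push_cast
  rfl

theorem eW_latRep2_latPt_comm (w z : Lat N) :
    eW (latRep2 N w) (latPt N z) = eW (latRep2 N z) (latPt N w) := by
  simp only [eW_latRep2_latPt, mul_comm]

theorem sum_eW_mul_conj_eW (z z' : Lat N) :
    ∑ w : Lat N, eW (latRep2 N w) (latPt N z) * conj (eW (latRep2 N w) (latPt N z')) =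
      if z = z' then 4 * (N : ℂ) ^ 2 else 0 := by
  calc ∑ w : Lat N, eW (latRep2 N w) (latPt N z) * conj (eW (latRep2 N w) (latPt N z'))
      = (∑ u, (ZMod.stdAddChar (u * z.1) : ℂ) * conj (ZMod.stdAddChar (u * z'.1) : ℂ)) *
        ∑ v, (ZMod.stdAddChar (v * z.2) : ℂ) * conj (ZMod.stdAddChar (v * z'.2) : ℂ) := by
        simp only [Finset.sum_mul_sum, Fintype.sum_prod_type, eW_latRep2_latPt, map_mul,
          mul_mul_mul_comm]
    _ = if z = z' then 4 * (N : ℂ) ^ 2 else 0 := by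
        simp only [sum_stdAddChar_mul_conj, Prod.ext_iff, ite_and, ite_mul, mul_ite, mul_zero,
          zero_mul]
        push_cast
        split_ifs <;> ring

/-- The inner product `⟨f, g⟩_{Λ_ε}`, extended to complex functions by conjugating `g`. -/
def latInner (N : ℕ) [NeZero N] (f g : Lat N → ℂ) : ℂ :=
  ∑ z : Lat N, ((N : ℂ) ^ 2)⁻¹ * f z * conj (g z)

theorem latInner_ofReal (f g : Lat N → ℝ) :
    latInner N (fun z => (f z : ℂ)) (fun z => (g z : ℂ)) =
      ((∑ z, ((N : ℝ) ^ 2)⁻¹ * f z * g z : ℝ) : ℂ) := by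
  simp only [latInner, Complex.conj_ofReal]
  push_cast
  rfl

theorem latInner_sum_sum {ι κ : Type*} (s : Finset ι) (t : Finset κ) (f : ι → Lat N → ℂ)
    (g : κ → Lat N → ℂ) : latInner N (∑ i ∈ s, f i) (∑ j ∈ t, g j) =
      ∑ z ∈ s ×ˢ t, latInner N (f z.1) (g z.2) := by
  unfold latInner
  rw [Finset.sum_comm]
  refine Finset.sum_congr rfl fun x _ => ?_
  simp only [mul_assoc, Finset.sum_apply, map_sum, Finset.sum_mul_sum, ← Finset.mul_sum,
    Finset.sum_product]

/-- The trigonometric polynomial with coefficients `c`, restricted to the lattice: the inverse of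
the discrete Fourier transform `dFT` on the frequencies `Λ_N`. -/
def latSynth (N : ℕ) [NeZero N] (c : Lat N → ℂ) (z : Lat N) : ℂ :=
  (1 / 4 : ℂ) * ∑ w : Lat N, c w * eW (latRep2 N w) (latPt N z)

theorem latInner_latSynth_right (f d : Lat N → ℂ) :
    latInner N f (latSynth N d) = (1 / 4 : ℂ) * ∑ w, dFT N f (latRep2 N w) * conj (d w) := by
  simp only [latInner, latSynth, dFT, map_mul, map_sum, Finset.mul_sum, Finset.sum_mul]
  rw [Finset.sum_comm]
  refine Finset.sum_congr rfl fun w _ => Finset.sum_congr rfl fun z _ => ?_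
  simp only [map_div₀, map_one, map_ofNat]
  ring

theorem dFT_latSynth (c : Lat N → ℂ) (w : Lat N) : dFT N (latSynth N c) (latRep2 N w) = c w := by
  have hN : (N : ℂ) ≠ 0 := NeZero.ne _
  calc dFT N (latSynth N c) (latRep2 N w)
      = ∑ v, (1 / 4) * ((N : ℂ) ^ 2)⁻¹ * c v *
          ∑ z, eW (latRep2 N z) (latPt N v) * conj (eW (latRep2 N z) (latPt N w)) := by
        simp only [dFT, latSynth, Finset.mul_sum, Finset.sum_mul]
        rw [Finset.sum_comm]
        refine Finset.sum_congr rfl fun v _ => Finset.sum_congr rfl fun z _ => ?_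
        rw [eW_latRep2_latPt_comm z v, eW_latRep2_latPt_comm z w]
        ring
    _ = c w := by
        simp only [sum_eW_mul_conj_eW, mul_ite, mul_zero, Finset.sum_ite_eq', Finset.mem_univ,
          if_true]
        field_simp

theorem latSynth_dFT (f : Lat N → ℂ) : latSynth N (fun w => dFT N f (latRep2 N w)) = f := by
  have hN : (N : ℂ) ≠ 0 := NeZero.ne _
  ext z
  calc latSynth N (fun w => dFT N f (latRep2 N w)) z
      = ∑ y, (1 / 4) * ((N : ℂ) ^ 2)⁻¹ * f y *
          ∑ w, eW (latRep2 N w) (latPt N z) * conj (eW (latRep2 N w) (latPt N y)) := by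
        simp only [dFT, latSynth, Finset.mul_sum, Finset.sum_mul]
        rw [Finset.sum_comm]
        refine Finset.sum_congr rfl fun y _ => Finset.sum_congr rfl fun w _ => ?_
        ring
    _ = f z := by
        simp only [sum_eW_mul_conj_eW, mul_ite, mul_zero, Finset.sum_ite_eq, Finset.mem_univ,
          if_true]
        field_simp

theorem latInner_latSynth (c d : Lat N → ℂ) :
    latInner N (latSynth N c) (latSynth N d) = (1 / 4 : ℂ) * ∑ w, c w * conj (d w) := by
  simp only [latInner_latSynth_right, dFT_latSynth]

end Fourier

section LittlewoodPaley

variable {P : LPpartition} {j k : ℤ} {r : ℝ × ℝ}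

theorem enorm2_smul (c : ℝ) (r : ℝ × ℝ) : enorm2 (c • r) = |c| * enorm2 r := by
  rw [enorm2, enorm2, ← Real.sqrt_sq_eq_abs, ← Real.sqrt_mul (sq_nonneg c)]
  congr 1
  simp only [Prod.smul_fst, Prod.smul_snd, smul_eq_mul]
  ring

theorem enorm2_zpow_neg_smul (k : ℤ) (r : ℝ × ℝ) :
    enorm2 ((2 : ℝ) ^ (-k) • r) = enorm2 r / 2 ^ k := by
  rw [enorm2_smul, abs_of_pos (by positivity), zpow_neg, inv_mul_eq_div]

theorem LPchi_eq_zero_of_lt (hk : k ≠ -1) (h : enorm2 r < 3 / 4 * 2 ^ k) : LPchi P k r = 0 := by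
  simp only [LPchi, if_neg hk]
  refine P.supp _ (.inl ?_)
  rwa [enorm2_zpow_neg_smul, div_lt_iff₀ (by positivity)]

theorem LPchi_eq_zero_of_gt (h : 8 / 3 * 2 ^ k < enorm2 r) : LPchi P k r = 0 := by
  obtain rfl | hk := eq_or_ne k (-1)
  · have hradius : (8 / 3 * 2 ^ (-1 : ℤ) : ℝ) = 4 / 3 := by norm_num
    exact P.supp_t r (hradius ▸ h)
  · simp only [LPchi, if_neg hk]
    refine P.supp _ (.inr ?_)
    rwa [enorm2_zpow_neg_smul, lt_div_iff₀ (by positivity)]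

theorem LPchi_mul_LPchi_eq_zero (hj : -1 ≤ j) (hk : -1 ≤ k) (hjk : 1 < |j - k|) (r : ℝ × ℝ) :
    LPchi P j r * LPchi P k r = 0 := by
  wlog hlt : j < k generalizing j k
  · rw [mul_comm]
    exact this hk hj (by rwa [abs_sub_comm]) (by grind)
  obtain hr | hr := lt_or_ge (enorm2 r) (3 / 4 * 2 ^ k)
  · rw [LPchi_eq_zero_of_lt (by lia) hr, mul_zero]
  · have hpow : (2 : ℝ) ^ (j + 2) ≤ 2 ^ k := zpow_le_zpow_right₀ one_le_two (by grind)
    have hpos : (0 : ℝ) < 2 ^ j := by positivity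
    rw [zpow_add₀ two_ne_zero, show (2 : ℝ) ^ (2 : ℤ) = 4 by norm_num] at hpow
    rw [LPchi_eq_zero_of_gt (by linarith), zero_mul]

theorem finite_support_LPchi (P : LPpartition) (r : ℝ × ℝ) :
    (Function.support fun n : ℕ => LPchi P (n - 1) r).Finite := by
  rw [Function.support, ← Filter.eventually_cofinite, Nat.cofinite_eq_atTop]
  filter_upwards [Filter.eventually_gt_atTop 0,
    (tendsto_pow_atTop_atTop_of_one_lt (one_lt_two (α := ℝ))).eventually_gt_atTop
      (8 / 3 * enorm2 r)] with n hn hr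
  refine LPchi_eq_zero_of_lt (by lia) ?_
  rw [zpow_sub_one₀ two_ne_zero, zpow_natCast]
  linarith

theorem hasSum_LPchi (P : LPpartition) (r : ℝ × ℝ) :
    HasSum (fun n : ℕ => LPchi P (n - 1) r) 1 := by
  have hs : Summable fun n : ℕ => LPchi P (n - 1) r :=
    summable_of_hasFiniteSupport (finite_support_LPchi P r)
  have hk (k : ℕ) : LPchi P ((k + 1 : ℕ) - 1) r = P.chi ((2 : ℝ) ^ (-(k : ℤ)) • r) := by
    rw [LPchi, if_neg (by lia)]
    simp
  have h0 : LPchi P ((0 : ℕ) - 1) r = P.chit r := by simp [LPchi]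
  rw [hs.hasSum_iff, hs.tsum_eq_zero_add, h0, ← P.partition r]
  simp only [hk]

end LittlewoodPaley

section Blocks

variable {N : ℕ} [NeZero N] {P : LPpartition} {j k : ℤ}

/-- The block `δ_k (Ex f)` restricted to the lattice `Λ_ε`. -/
def latBlock (N : ℕ) [NeZero N] (P : LPpartition) (k : ℤ) (f : Lat N → ℂ) : Lat N → ℂ :=
  fun z => dBlock N P k f (latPt N z)

theorem latBlock_eq_latSynth (k : ℤ) (f : Lat N → ℂ) : latBlock N P k f =
    latSynth N fun w => LPchi P k (latRep N w.1, latRep N w.2) * dFT N f (latRep2 N w) :=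
  rfl

theorem latInner_latBlock_eq_zero (hj : -1 ≤ j) (hk : -1 ≤ k) (hjk : 1 < |j - k|)
    (f g : Lat N → ℂ) : latInner N (latBlock N P j f) (latBlock N P k g) = 0 := by
  rw [latBlock_eq_latSynth, latBlock_eq_latSynth, latInner_latSynth]
  refine mul_eq_zero_of_right _ (Finset.sum_eq_zero fun w _ => ?_)
  rw [map_mul, Complex.conj_ofReal, mul_mul_mul_comm, ← Complex.ofReal_mul,
    LPchi_mul_LPchi_eq_zero hj hk hjk, Complex.ofReal_zero, zero_mul]

theorem hasSum_latBlock (P : LPpartition) (f : Lat N → ℂ) :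
    HasSum (fun n : ℕ => latBlock N P (n - 1) f) f := by
  refine Pi.hasSum.2 fun z => ?_
  have hw (w : Lat N) : HasSum (fun n : ℕ => (LPchi P (n - 1) (latRep N w.1, latRep N w.2) : ℂ) *
      dFT N f (latRep2 N w) * eW (latRep2 N w) (latPt N z))
      (dFT N f (latRep2 N w) * eW (latRep2 N w) (latPt N z)) := by
    simpa only [mul_assoc, Complex.ofReal_one, one_mul] using (Complex.hasSum_ofReal.2
      (hasSum_LPchi P (latRep N w.1, latRep N w.2))).mul_right
        (dFT N f (latRep2 N w) * eW (latRep2 N w) (latPt N z))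
  exact congrFun (latSynth_dFT f) z ▸ (hasSum_sum fun w _ => hw w).mul_left (1 / 4 : ℂ)

theorem finite_support_latBlock (P : LPpartition) (f : Lat N → ℂ) :
    (Function.support fun n : ℕ => latBlock N P (n - 1) f).Finite := by
  refine (Set.finite_iUnion fun w : Lat N =>
    finite_support_LPchi P (latRep N w.1, latRep N w.2)).subset fun n hn => ?_
  by_contra hnot
  simp only [Set.mem_iUnion, Function.mem_support, not_exists, not_not] at hnot
  refine hn (funext fun z => ?_)
  simp [latBlock_eq_latSynth, latSynth, hnot]

theorem exists_eq_sum_latBlock (P : LPpartition) (f : Lat N → ℂ) :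
    ∃ s : Finset ℕ, f = ∑ n ∈ s, latBlock N P (n - 1) f := by
  have hfin := finite_support_latBlock P f
  refine ⟨hfin.toFinset, (hasSum_latBlock P f).unique (hasSum_sum_of_ne_finset_zero ?_)⟩
  simp

end Blocks

section Norms

variable {N : ℕ} [NeZero N] {P : LPpartition} {p q : ℝ≥0∞}

/-- The measure giving mass `ε²` to each point of `Λ_ε`. -/
def latMeasure (N : ℕ) : Measure (Lat N) :=
  ((N : ℝ≥0) ^ 2)⁻¹ • Measure.count

instance : IsFiniteMeasure (latMeasure N) := by
  unfold latMeasure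
  infer_instance

theorem dLp_eq_toReal_eLpNorm {E : Type*} [NormedAddCommGroup E] (hp : p ≠ 0) (f : Lat N → E) :
    dLp N p f = (eLpNorm f p (latMeasure N)).toReal := by
  have hN : ((N : ℝ≥0) ^ 2)⁻¹ ≠ 0 := by simp [NeZero.ne N]
  rw [latMeasure, toReal_eLpNorm_smul_count hp hN, dLp, tsum_fintype]
  push_cast
  rfl

theorem enorm_latInner_le_lintegral (f g : Lat N → ℂ) :
    ‖latInner N f g‖ₑ ≤ ∫⁻ z, ‖f z‖ₑ * ‖g z‖ₑ ∂latMeasure N := by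
  rw [latMeasure, lintegral_smul_measure, lintegral_count, tsum_fintype]
  refine (enorm_sum_le _ _).trans_eq ?_
  have hN : ‖((N : ℂ) ^ 2)⁻¹‖ₑ = (((N : ℝ≥0) ^ 2)⁻¹ : ℝ≥0) := by
    simp [enorm_eq_nnnorm]
  simp only [mul_assoc, enorm_mul, hN, RCLike.enorm_conj, ENNReal.smul_def, smul_eq_mul,
    Finset.mul_sum]

theorem norm_latInner_le (p p' : ℝ≥0∞) [p.HolderConjugate p'] (f g : Lat N → ℂ) :
    ‖latInner N f g‖ ≤ dLp N p f * dLp N p' g := by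
  have hf : eLpNorm f p (latMeasure N) ≠ ∞ := eLpNorm_lt_top_of_finite.ne
  have hg : eLpNorm g p' (latMeasure N) ≠ ∞ := eLpNorm_lt_top_of_finite.ne
  rw [dLp_eq_toReal_eLpNorm (ENNReal.HolderConjugate.ne_zero p p'),
    dLp_eq_toReal_eLpNorm (ENNReal.HolderConjugate.ne_zero p' p), ← ENNReal.toReal_mul,
    ← toReal_enorm]
  exact ENNReal.toReal_mono (ENNReal.mul_ne_top hf hg) <|
    (enorm_latInner_le_lintegral f g).trans <|
      lintegral_enorm_mul_enorm_le p p' .of_discrete .of_discrete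

/-- The `n`-th term of the sequence whose `ℓ^q` norm is the Besov norm `dBesov`; it carries the
frequency index `k = n - 1`. -/
def besovTerm (N : ℕ) [NeZero N] (P : LPpartition) (ν : ℝ) (p : ℝ≥0∞) (f : Lat N → ℂ) (n : ℕ) :
    ℝ :=
  2 ^ (ν * (n - 1)) * dLp N p (latBlock N P (n - 1) f)

theorem besovTerm_nonneg (hp : p ≠ 0) (ν : ℝ) (f : Lat N → ℂ) (n : ℕ) :
    0 ≤ besovTerm N P ν p f n := by
  rw [besovTerm, dLp_eq_toReal_eLpNorm hp]
  positivity

theorem memLp_besovTerm (hp : p ≠ 0) (ν : ℝ) (f : Lat N → ℂ) (q : ℝ≥0∞) :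
    MemLp (besovTerm N P ν p f) q Measure.count := by
  refine memLp_count_of_finite_support ((finite_support_latBlock P f).subset fun n hn => ?_) q
  refine mt (fun h0 : latBlock N P (n - 1) f = 0 => ?_) hn
  rw [besovTerm, h0, dLp_eq_toReal_eLpNorm hp, eLpNorm_zero, ENNReal.toReal_zero, mul_zero]

theorem dBesov_eq_toReal_eLpNorm (hp : p ≠ 0) (hq : q ≠ 0) (ν : ℝ) (f : Lat N → ℂ) :
    dBesov N P ν p q f = (eLpNorm (besovTerm N P ν p f) q Measure.count).toReal := by
  rw [← one_smul ℝ≥0 Measure.count, toReal_eLpNorm_smul_count hq one_ne_zero]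
  simp only [Real.norm_of_nonneg (besovTerm_nonneg hp ν f _), NNReal.coe_one, one_mul]
  rfl

theorem one_le_two_rpow_abs_mul {α s t : ℝ} (h : |s - t| ≤ 1) :
    1 ≤ (2 : ℝ) ^ |α| * (2 ^ (α * s) * 2 ^ (-α * t)) := by
  rw [← Real.rpow_add two_pos, ← Real.rpow_add two_pos]
  refine Real.one_le_rpow one_le_two ?_
  have h1 : |α * (s - t)| ≤ |α| := by
    rw [abs_mul]
    exact mul_le_of_le_one_right (abs_nonneg α) h
  linarith [neg_abs_le (α * (s - t))]

theorem norm_latInner_latBlock_le (p p' : ℝ≥0∞) [p.HolderConjugate p'] (α : ℝ)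
    (f g : Lat N → ℂ) {n m : ℕ} (h : |(n : ℤ) - m| ≤ 1) :
    ‖latInner N (latBlock N P (n - 1) f) (latBlock N P (m - 1) g)‖ ≤
      2 ^ |α| * (besovTerm N P α p f n * besovTerm N P (-α) p' g m) := by
  calc ‖latInner N (latBlock N P (n - 1) f) (latBlock N P (m - 1) g)‖
      ≤ dLp N p (latBlock N P (n - 1) f) * dLp N p' (latBlock N P (m - 1) g) :=
        norm_latInner_le p p' _ _
    _ ≤ 2 ^ |α| * (2 ^ (α * (n - 1)) * 2 ^ (-α * (m - 1))) *
          (dLp N p (latBlock N P (n - 1) f) * dLp N p' (latBlock N P (m - 1) g)) := by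
        refine le_mul_of_one_le_left ((norm_nonneg _).trans (norm_latInner_le p p' _ _)) ?_
        exact one_le_two_rpow_abs_mul (by rw [sub_sub_sub_cancel_right]; exact_mod_cast h)
    _ = _ := by
        rw [besovTerm, besovTerm]
        ring

end Norms

section Duality

variable {N : ℕ} [NeZero N]

/-- Pairs of frequency indices at distance at most one: the only ones whose Littlewood–Paley
annuli can overlap. -/
def nearDiagonal : Set (ℕ × ℕ) := {z | |(z.1 : ℤ) - z.2| ≤ 1}

theorem count_abs_sub_le_one (n : ℕ) : Measure.count {m : ℕ | |(n : ℤ) - m| ≤ 1} ≤ 3 := by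
  have hsub : {m : ℕ | |(n : ℤ) - m| ≤ 1} ⊆ (Finset.Icc (n - 1) (n + 1) : Finset ℕ) := by
    intro m hm
    rw [Set.mem_ofPred_eq, abs_le] at hm
    rw [Finset.coe_Icc, Set.mem_Icc]
    lia
  have hcard : (Finset.Icc (n - 1) (n + 1)).card ≤ 3 := by
    rw [Nat.card_Icc]
    lia
  refine (measure_mono hsub).trans ?_
  rw [Measure.count_apply_finset]
  exact_mod_cast hcard

theorem enorm_latInner_latBlock_le (P : LPpartition) (α : ℝ) (p p' : ℝ≥0∞)
    [p.HolderConjugate p'] (f g : Lat N → ℂ) (z : ℕ × ℕ) :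
    ‖latInner N (latBlock N P (z.1 - 1) f) (latBlock N P (z.2 - 1) g)‖ₑ ≤
      nearDiagonal.indicator (fun z => ENNReal.ofReal (2 ^ |α|) *
        (‖besovTerm N P α p f z.1‖ₑ * ‖besovTerm N P (-α) p' g z.2‖ₑ)) z := by
  by_cases hz : z ∈ nearDiagonal
  · rw [Set.indicator_of_mem hz, ← enorm_mul, ← Real.enorm_of_nonneg (by positivity), ← enorm_mul,
      enorm_le_iff_norm_le]
    exact (norm_latInner_latBlock_le p p' α f g hz).trans (le_abs_self _)
  · have hz' : 1 < |((z.1 : ℤ) - 1) - ((z.2 : ℤ) - 1)| := by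
      rw [sub_sub_sub_cancel_right]
      exact not_le.1 hz
    rw [latInner_latBlock_eq_zero (by lia) (by lia) hz', enorm_zero]
    exact zero_le

theorem enorm_latInner_le (P : LPpartition) (α : ℝ) (p q p' q' : ℝ≥0∞) [p.HolderConjugate p']
    [q.HolderConjugate q'] (f g : Lat N → ℂ) :
    ‖latInner N f g‖ₑ ≤ ENNReal.ofReal (2 ^ |α|) * (3 *
      (eLpNorm (besovTerm N P α p f) q Measure.count *
        eLpNorm (besovTerm N P (-α) p' g) q' Measure.count)) := by
  obtain ⟨s, hs⟩ := exists_eq_sum_latBlock P f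
  obtain ⟨t, ht⟩ := exists_eq_sum_latBlock P g
  have hcol (m : ℕ) : Measure.count ((fun n => (n, m)) ⁻¹' nearDiagonal) ≤ 3 := by
    simpa only [nearDiagonal, Set.preimage_ofPred_eq, abs_sub_comm] using count_abs_sub_le_one m
  calc ‖latInner N f g‖ₑ
      = ‖∑ z ∈ s ×ˢ t, latInner N (latBlock N P (z.1 - 1) f) (latBlock N P (z.2 - 1) g)‖ₑ := by
        rw [← latInner_sum_sum s t (fun n => latBlock N P (n - 1) f)
          (fun m => latBlock N P (m - 1) g), ← hs, ← ht]
    _ ≤ ∑ z ∈ s ×ˢ t, nearDiagonal.indicator (fun z => ENNReal.ofReal (2 ^ |α|) *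
          (‖besovTerm N P α p f z.1‖ₑ * ‖besovTerm N P (-α) p' g z.2‖ₑ)) z :=
        (enorm_sum_le _ _).trans <|
          Finset.sum_le_sum fun z _ => enorm_latInner_latBlock_le P α p p' f g z
    _ ≤ ∑' z, nearDiagonal.indicator (fun z => ENNReal.ofReal (2 ^ |α|) *
          (‖besovTerm N P α p f z.1‖ₑ * ‖besovTerm N P (-α) p' g z.2‖ₑ)) z :=
        ENNReal.sum_le_tsum _
    _ = ENNReal.ofReal (2 ^ |α|) * ∫⁻ z in nearDiagonal,
          ‖besovTerm N P α p f z.1‖ₑ * ‖besovTerm N P (-α) p' g z.2‖ₑ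
          ∂Measure.count.prod Measure.count := by
        rw [count_prod_count, ← lintegral_count, lintegral_indicator .of_discrete,
          lintegral_const_mul _ .of_discrete]
    _ ≤ _ := by
        nth_rw 1 [← rpow_inv_mul_rpow_inv_of_holderConjugate q q' 3]
        gcongr
        exact setLIntegral_prod_enorm_mul_enorm_le q q' .of_discrete count_abs_sub_le_one hcol
          .of_discrete .of_discrete

theorem statement9_general (P : LPpartition) (α : ℝ) (p q p' q' : ℝ≥0∞) [p.HolderConjugate p']
    [q.HolderConjugate q'] (N : ℕ) [NeZero N] (f g : Lat N → ℂ) :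
    ‖latInner N f g‖ ≤ 3 * 2 ^ |α| * dBesov N P α p q f * dBesov N P (-α) p' q' g := by
  have hp := ENNReal.HolderConjugate.ne_zero p p'
  have hp' := ENNReal.HolderConjugate.ne_zero p' p
  have hF := (memLp_besovTerm (P := P) hp α f q).eLpNorm_ne_top
  have hG := (memLp_besovTerm (P := P) hp' (-α) g q').eLpNorm_ne_top
  rw [dBesov_eq_toReal_eLpNorm hp (ENNReal.HolderConjugate.ne_zero q q'),
    dBesov_eq_toReal_eLpNorm hp' (ENNReal.HolderConjugate.ne_zero q' q), ← toReal_enorm]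
  refine (ENNReal.toReal_mono (by finiteness) (enorm_latInner_le P α p q p' q' f g)).trans_eq ?_
  simp only [ENNReal.toReal_mul, ENNReal.toReal_ofReal (Real.rpow_nonneg two_pos.le _),
    ENNReal.toReal_ofNat]
  ring

end Duality

/-- duality for discrete Besov spaces:
`⟨f,g⟩_{Λ_ε} ≤ C ‖f‖_{B^α_{p,q}(Λ_ε)} ‖g‖_{B^{-α}_{p',q'}(Λ_ε)}`. -/
theorem statement9 (P : LPpartition) (α : ℝ) (p q p' q' : ℝ≥0∞)
    (hp : 1 ≤ p) (hq : 1 ≤ q) (hp' : 1 ≤ p') (hq' : 1 ≤ q')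
    (hpc : 1/p + 1/p' = 1) (hqc : 1/q + 1/q' = 1) :
    ∃ C : ℝ, 0 < C ∧ ∀ (N : ℕ) [NeZero N], ∀ f g : Lat N → ℝ,
      (∑ x : Lat N, ((N : ℝ)^2)⁻¹ * f x * g x) ≤
        C * dBesov N P α p q (fun z => ((f z : ℝ) : ℂ)) *
          dBesov N P (-α) p' q' (fun z => ((g z : ℝ) : ℂ)) := by
  have : p.HolderConjugate p' := ⟨by simpa using hpc⟩
  have : q.HolderConjugate q' := ⟨by simpa using hqc⟩
  refine ⟨3 * 2 ^ |α|, by positivity, fun N _ f g => (le_abs_self _).trans ?_⟩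
  rw [← Real.norm_eq_abs, ← Complex.norm_real, ← latInner_ofReal]
  exact statement9_general P α p q p' q' N _ _

end IsingKac
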